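/- Kullback–Leibler bound between two Gaussian factor-regression models (Lemma B.4). Let A ∈ ℝ^{p×K}, let Σ_Z be K×K symmetric positive definite, let Γ be p×p symmetric positive definite, and let σ² > 0. For β ∈ ℝ^K let P_β denote the centered Gaussian distribution on ℝ^{p+1} with covariance matrix [[A Σ_Z Aᵀ + Γ, A Σ_Z β], [βᵀ Σ_Z Aᵀ, βᵀ Σ_Z β + σ²]] (this matrix is positive definite). Set G = Σ_Z^{-1} + Aᵀ Γ^{-1} A. Then for all β₁, β₂ ∈ ℝ^K, the Kullback–Leibler divergence satisfies KL(P_{β₁} ‖ P_{β₂}) ≤ ( |β₁ᵀ G^{-1} β₁ − β₂ᵀ G^{-1} β₂| + ‖Σ_Z − G^{-1}‖_op · ‖β₁ − β₂‖₂² ) / ( σ² + min(‖β₁‖₂², ‖β₂‖₂²) / ‖G‖_op ). -/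

import Mathlib

open Matrix MeasureTheory ProbabilityTheory

noncomputable section

/-- The standard Gaussian measure on `ι → ℝ`. -/
def stdGaussian (ι : Type*) [Fintype ι] : Measure (ι → ℝ) :=
  Measure.pi fun _ => gaussianReal 0 1

/-- The covariance matrix of the Gaussian pair `(X, Y)`:
`[[A Σ_Z Aᵀ + Γ, A Σ_Z β], [βᵀ Σ_Z Aᵀ, βᵀ Σ_Z β + σ²]]`, indexed by `Fin p ⊕ Unit`. -/
def fullCov {p K : ℕ} (A : Matrix (Fin p) (Fin K) ℝ) (S : Matrix (Fin K) (Fin K) ℝ)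
    (Γ : Matrix (Fin p) (Fin p) ℝ) (σ2 : ℝ) (β : Fin K → ℝ) :
    Matrix (Fin p ⊕ Unit) (Fin p ⊕ Unit) ℝ :=
  Matrix.fromBlocks (A * S * Aᵀ + Γ)
    (Matrix.of fun i _ => (A.mulVec (S.mulVec β)) i)
    (Matrix.of fun _ j => (A.mulVec (S.mulVec β)) j)
    (Matrix.of fun _ _ => β ⬝ᵥ S.mulVec β + σ2)

/-- The operator (spectral) norm of a real square matrix. -/
def opNorm {K : ℕ} (M : Matrix (Fin K) (Fin K) ℝ) : ℝ :=
  ‖Matrix.toEuclideanCLM (𝕜 := ℝ) M‖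

/-- The Kullback–Leibler divergence `KL(P ‖ Q) = ∫ log (dP/dQ) dP`. -/
def klDivReal {α : Type*} [MeasurableSpace α] (P Q : Measure α) : ℝ :=
  ∫ x, Real.log (P.rnDeriv Q x).toReal ∂P

/-- density of the standard Gaussian -/
def gphi {ι : Type*} [Fintype ι] (x : ι → ℝ) : ℝ := ∏ i, gaussianPDFReal 0 1 (x i)

lemma gphi_pos {ι : Type*} [Fintype ι] (x : ι → ℝ) : 0 < gphi x :=
  Finset.prod_pos fun _ _ => gaussianPDFReal_pos _ _ _ one_ne_zero

lemma gphi_meas {ι : Type*} [Fintype ι] : Measurable (gphi : (ι → ℝ) → ℝ) := by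
  unfold gphi
  exact Finset.measurable_prod _ fun i _ =>
    (measurable_gaussianPDFReal 0 1).comp (measurable_pi_apply i)

lemma log_gphi {ι : Type*} [Fintype ι] (x : ι → ℝ) :
    Real.log (gphi x) = Fintype.card ι * Real.log (√(2 * Real.pi))⁻¹ - (x ⬝ᵥ x) / 2 := by
  unfold gphi
  rw [Real.log_prod (fun i _ => (gaussianPDFReal_pos 0 1 (x i) one_ne_zero).ne')]
  have : ∀ t : ℝ, Real.log (gaussianPDFReal 0 1 t) = Real.log (√(2 * Real.pi))⁻¹ - t * t / 2 := by
    intro t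
    rw [gaussianPDFReal, Real.log_mul (by positivity) (Real.exp_pos _).ne', Real.log_exp]
    simp
    ring
  simp only [this, Finset.sum_sub_distrib, ← Finset.sum_div, dotProduct]
  simp

lemma stdGaussian_eq (ι : Type*) [Fintype ι] : _root_.stdGaussian ι =
    (volume : Measure (ι → ℝ)).withDensity fun x => ENNReal.ofReal (gphi x) := by
  unfold _root_.stdGaussian
  symm
  refine (Measure.pi_eq fun s hs => ?_).symm
  rw [withDensity_apply _ (MeasurableSet.univ_pi hs), volume_pi, Measure.restrict_pi_pi]
  have hi : ∀ i, Integrable (gaussianPDFReal 0 1) (volume.restrict (s i)) :=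
    fun i => (integrable_gaussianPDFReal 0 1).restrict
  rw [← ofReal_integral_eq_lintegral_ofReal]
  · unfold gphi
    rw [integral_fintype_prod_eq_prod (fun _ => gaussianPDFReal 0 1), ENNReal.ofReal_prod_of_nonneg]
    · refine Finset.prod_congr rfl fun i _ => ?_
      rw [gaussianReal_apply_eq_integral _ one_ne_zero]
    · exact fun i _ => integral_nonneg fun x => gaussianPDFReal_nonneg _ _ _
  · exact Integrable.fintype_prod hi
  · exact ae_of_all _ fun x => (gphi_pos x).le

lemma map_stdGaussian_eq {ι : Type*} [Fintype ι] [DecidableEq ι] (B : Matrix ι ι ℝ) (hB : B.det ≠ 0) :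
    (_root_.stdGaussian ι).map (B.mulVec ·) = (volume : Measure (ι → ℝ)).withDensity
      fun x => ENNReal.ofReal (|B.det⁻¹| * gphi (B⁻¹ *ᵥ x)) := by
  have hu : IsUnit B.det := hB.isUnit
  have hm : Measurable (B.mulVec · : (ι → ℝ) → ι → ℝ) := by
    exact (Continuous.matrix_mulVec continuous_const continuous_id).measurable
  have hm' : Measurable (B⁻¹.mulVec · : (ι → ℝ) → ι → ℝ) := by
    exact (Continuous.matrix_mulVec continuous_const continuous_id).measurable
  have hv : (volume : Measure (ι → ℝ)).map (B.mulVec ·) = ENNReal.ofReal |B.det⁻¹| • volume :=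
    Real.map_matrix_volume_pi_eq_smul_volume_pi hB
  have hg : Measurable fun x : ι → ℝ => ENNReal.ofReal (gphi (B⁻¹ *ᵥ x)) :=
    (gphi_meas.comp hm').ennreal_ofReal
  have h1 : (fun x : ι → ℝ => ENNReal.ofReal (|B.det⁻¹| * gphi (B⁻¹ *ᵥ x))) =
      ENNReal.ofReal |B.det⁻¹| • fun x => ENNReal.ofReal (gphi (B⁻¹ *ᵥ x)) := by
    ext x; simp [ENNReal.ofReal_mul]
  rw [h1, withDensity_smul _ hg, ← withDensity_smul_measure, ← hv, stdGaussian_eq]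
  ext s hs
  rw [Measure.map_apply hm hs, withDensity_apply _ hs, withDensity_apply _ (hm hs),
    setLIntegral_map hs hg hm]
  simp [mulVec_mulVec, nonsing_inv_mul _ hu]

instance {ι : Type*} [Fintype ι] : IsProbabilityMeasure (_root_.stdGaussian ι) := by
  unfold _root_.stdGaussian; infer_instance

lemma memLp_lin {ι : Type*} [Fintype ι] (a : ι → ℝ) (i : ι) :
    MemLp (fun z : ι → ℝ => a i * z i) 2 (_root_.stdGaussian ι) := by
  have h : MemLp (fun z : ℝ => a i * z) 2 (gaussianReal 0 1) :=
    (memLp_id_gaussianReal 2).const_mul (a i)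
  exact h.comp_measurePreserving (measurePreserving_eval (fun _ : ι => gaussianReal 0 1) i)

lemma second_moment {ι : Type*} [Fintype ι] (a : ι → ℝ) :
    Integrable (fun z => (a ⬝ᵥ z) ^ 2) (_root_.stdGaussian ι) ∧
    ∫ z, (a ⬝ᵥ z) ^ 2 ∂(_root_.stdGaussian ι) = a ⬝ᵥ a := by
  have hL : MemLp (fun z => a ⬝ᵥ z) 2 (_root_.stdGaussian ι) :=
    memLp_finsetSum _ fun i _ => memLp_lin a i
  refine ⟨hL.integrable_sq, ?_⟩
  have h0 : ∫ z, a ⬝ᵥ z ∂(_root_.stdGaussian ι) = 0 := by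
    simp only [dotProduct]
    rw [integral_finsetSum _ fun i _ => (memLp_lin a i).integrable one_le_two]
    refine Finset.sum_eq_zero fun i _ => ?_
    rw [integral_const_mul]
    have : ∫ z : ι → ℝ, z i ∂(_root_.stdGaussian ι) = ∫ t, t ∂(gaussianReal 0 1) := by
      rw [← (measurePreserving_eval (fun _ : ι => gaussianReal 0 1) i).map_eq, integral_map]
      · rfl
      · exact (measurable_pi_apply i).aemeasurable
      · exact measurable_id.aestronglyMeasurable
    rw [this, integral_id_gaussianReal, mul_zero]
  rw [← variance_of_integral_eq_zero hL.aemeasurable h0]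
  have hp := variance_sum_pi (ι := ι) (μ := fun _ => gaussianReal 0 1) (X := fun i t => a i * t)
    (fun i => (memLp_id_gaussianReal 2).const_mul (a i))
  have e : (∑ i, fun ω : ι → ℝ => a i * ω i) = fun z => a ⬝ᵥ z := by
    ext z; simp [dotProduct]
  rw [e] at hp
  unfold _root_.stdGaussian
  rw [hp]
  simp only [dotProduct]
  refine Finset.sum_congr rfl fun i _ => ?_
  rw [variance_const_mul, variance_fun_id_gaussianReal]
  simp; ring

lemma quad_moment {ι : Type*} [Fintype ι] (C : Matrix ι ι ℝ) :
    Integrable (fun z => (C *ᵥ z) ⬝ᵥ (C *ᵥ z)) (_root_.stdGaussian ι) ∧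
    ∫ z, (C *ᵥ z) ⬝ᵥ (C *ᵥ z) ∂(_root_.stdGaussian ι) = (C * Cᵀ).trace := by
  have e : (fun z => (C *ᵥ z) ⬝ᵥ (C *ᵥ z)) = fun z => ∑ i, (C i ⬝ᵥ z) ^ 2 := by
    ext z; simp [dotProduct, mulVec, sq]
  rw [e]
  refine ⟨integrable_finsetSum _ fun i _ => (second_moment (C i)).1, ?_⟩
  rw [integral_finsetSum _ fun i _ => (second_moment (C i)).1]
  simp only [(second_moment _).2]
  rfl

lemma kl_formula {ι : Type*} [Fintype ι] [DecidableEq ι] (B₁ B₂ : Matrix ι ι ℝ)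
    (h₁ : B₁.det ≠ 0) (h₂ : B₂.det ≠ 0) :
    klDivReal ((_root_.stdGaussian ι).map (B₁.mulVec ·)) ((_root_.stdGaussian ι).map (B₂.mulVec ·)) =
      (Real.log ((B₂ * B₂ᵀ).det / (B₁ * B₁ᵀ).det) - Fintype.card ι
        + ((B₂ * B₂ᵀ)⁻¹ * (B₁ * B₁ᵀ)).trace) / 2 := by
  have hu₁ : IsUnit B₁.det := h₁.isUnit
  have hm : ∀ B : Matrix ι ι ℝ, Measurable (B.mulVec · : (ι → ℝ) → ι → ℝ) := fun B =>
    (Continuous.matrix_mulVec continuous_const continuous_id).measurable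
  set g : Matrix ι ι ℝ → (ι → ℝ) → ℝ := fun B x => |B.det⁻¹| * gphi (B⁻¹ *ᵥ x) with hg
  have gpos : ∀ B : Matrix ι ι ℝ, B.det ≠ 0 → ∀ x, 0 < g B x := fun B hB x =>
    mul_pos (abs_pos.2 (inv_ne_zero hB)) (gphi_pos _)
  have gm : ∀ B : Matrix ι ι ℝ, Measurable (g B) := fun B =>
    (gphi_meas.comp (hm B⁻¹)).const_mul _
  have e1 := map_stdGaussian_eq B₁ h₁
  have e2 := map_stdGaussian_eq B₂ h₂
  set P₁ := (_root_.stdGaussian ι).map (B₁.mulVec ·) with hP₁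
  set P₂ := (_root_.stdGaussian ι).map (B₂.mulVec ·) with hP₂
  have : IsProbabilityMeasure P₂ := Measure.isProbabilityMeasure_map (hm _).aemeasurable
  have hf : Measurable fun x => ENNReal.ofReal (g B₁ x / g B₂ x) := ((gm _).div (gm _)).ennreal_ofReal
  have hd : P₁ = P₂.withDensity fun x => ENNReal.ofReal (g B₁ x / g B₂ x) := by
    rw [e1, e2, ← withDensity_mul _ (gm B₂).ennreal_ofReal hf]
    congr 1
    ext x
    rw [Pi.mul_apply, ← ENNReal.ofReal_mul (gpos B₂ h₂ x).le, mul_div_cancel₀ _ (gpos B₂ h₂ x).ne']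
  have hac : P₁ ≪ P₂ := hd ▸ withDensity_absolutelyContinuous _ _
  have hr : P₁.rnDeriv P₂ =ᵐ[P₁] fun x => ENNReal.ofReal (g B₁ x / g B₂ x) := by
    apply hac.ae_le
    rw [hd]
    exact Measure.rnDeriv_withDensity P₂ hf
  have hk : klDivReal P₁ P₂ = ∫ x, Real.log (g B₁ x / g B₂ x) ∂P₁ := by
    unfold klDivReal
    refine integral_congr_ae ?_
    filter_upwards [hr] with x hx
    rw [hx, ENNReal.toReal_ofReal (div_pos (gpos B₁ h₁ x) (gpos B₂ h₂ x)).le]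
  have hlm : Measurable fun x => Real.log (g B₁ x / g B₂ x) := ((gm _).div (gm _)).log
  rw [hk, hP₁, integral_map (hm _).aemeasurable hlm.aestronglyMeasurable]
  have hlog : ∀ B : Matrix ι ι ℝ, B.det ≠ 0 → ∀ x, Real.log (g B x) =
      - (Real.log (B * Bᵀ).det) / 2 + (Fintype.card ι * Real.log (√(2 * Real.pi))⁻¹ -
        ((B⁻¹ *ᵥ x) ⬝ᵥ (B⁻¹ *ᵥ x)) / 2) := by
    intro B hB x
    rw [hg]
    simp only
    rw [Real.log_mul (abs_pos.2 (inv_ne_zero hB)).ne' (gphi_pos _).ne', log_gphi, Real.log_abs,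
      Real.log_inv, det_mul, det_transpose, Real.log_mul hB hB]
    ring
  have hpt : ∀ z, Real.log (g B₁ (B₁ *ᵥ z) / g B₂ (B₁ *ᵥ z)) =
      Real.log ((B₂ * B₂ᵀ).det / (B₁ * B₁ᵀ).det) / 2 +
      ((((B₂⁻¹ * B₁) *ᵥ z) ⬝ᵥ ((B₂⁻¹ * B₁) *ᵥ z)) / 2 -
        (((1 : Matrix ι ι ℝ) *ᵥ z) ⬝ᵥ ((1 : Matrix ι ι ℝ) *ᵥ z)) / 2) := by
    intro z
    rw [Real.log_div (gpos B₁ h₁ _).ne' (gpos B₂ h₂ _).ne', hlog B₁ h₁, hlog B₂ h₂,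
      Real.log_div (by simp [h₂]) (by simp [h₁]), mulVec_mulVec, mulVec_mulVec,
      nonsing_inv_mul _ hu₁]
    ring
  simp only [hpt]
  have q1 := quad_moment (B₂⁻¹ * B₁)
  have q2 := quad_moment (1 : Matrix ι ι ℝ)
  have qs : Integrable (fun z => (((B₂⁻¹ * B₁) *ᵥ z) ⬝ᵥ ((B₂⁻¹ * B₁) *ᵥ z)) / 2 -
      (((1 : Matrix ι ι ℝ) *ᵥ z) ⬝ᵥ ((1 : Matrix ι ι ℝ) *ᵥ z)) / 2) (_root_.stdGaussian ι) :=
    (q1.1.div_const 2).sub (q2.1.div_const 2)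
  rw [integral_add (integrable_const _) qs,
    integral_sub (q1.1.div_const 2) (q2.1.div_const 2), integral_div, integral_div, integral_div, q1.2, q2.2]
  have ht : (B₂⁻¹ * B₁ * (B₂⁻¹ * B₁)ᵀ).trace = ((B₂ * B₂ᵀ)⁻¹ * (B₁ * B₁ᵀ)).trace := by
    rw [Matrix.mul_inv_rev, transpose_mul, transpose_nonsing_inv, ← Matrix.mul_assoc,
      trace_mul_comm]
    simp only [Matrix.mul_assoc]
  rw [ht]
  simp
  ring

lemma quad_le_opNorm {K : ℕ} (M : Matrix (Fin K) (Fin K) ℝ) (x : Fin K → ℝ) :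
    x ⬝ᵥ M *ᵥ x ≤ opNorm M * (x ⬝ᵥ x) := by
  have h1 := real_inner_le_norm (WithLp.toLp 2 x : EuclideanSpace ℝ (Fin K)) (Matrix.toEuclideanCLM (𝕜 := ℝ) M (WithLp.toLp 2 x))
  have h2 := (Matrix.toEuclideanCLM (𝕜 := ℝ) M).le_opNorm (WithLp.toLp 2 x)
  have h3 : ‖(WithLp.toLp 2 x : EuclideanSpace ℝ (Fin K))‖ * ‖(WithLp.toLp 2 x : EuclideanSpace ℝ (Fin K))‖ = x ⬝ᵥ x := by
    rw [← real_inner_self_eq_norm_mul_norm, EuclideanSpace.inner_toLp_toLp]; simp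
  have h4 : inner ℝ (WithLp.toLp 2 x : EuclideanSpace ℝ (Fin K)) (Matrix.toEuclideanCLM (𝕜 := ℝ) M (WithLp.toLp 2 x)) = x ⬝ᵥ M *ᵥ x := by
    rw [Matrix.toEuclideanCLM_toLp, EuclideanSpace.inner_toLp_toLp]; simp [dotProduct_comm]
  rw [h4] at h1
  calc _ ≤ _ := h1
    _ ≤ ‖(WithLp.toLp 2 x : EuclideanSpace ℝ (Fin K))‖ * (opNorm M * ‖(WithLp.toLp 2 x : EuclideanSpace ℝ (Fin K))‖) := by
      gcongr; exact h2
    _ = _ := by rw [← h3]; ring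

lemma inv_quad_ge {K : ℕ} (G : Matrix (Fin K) (Fin K) ℝ) (hG : G.PosDef) (x : Fin K → ℝ) :
    (x ⬝ᵥ x) / opNorm G ≤ x ⬝ᵥ G⁻¹ *ᵥ x := by
  have hu : IsUnit G.det := (Matrix.isUnit_iff_isUnit_det _).1 hG.isUnit
  have hT : Gᵀ = G := by simpa using hG.isHermitian.eq
  set y := G⁻¹ *ᵥ x with hy
  have hx : x = G *ᵥ y := by rw [hy, mulVec_mulVec, mul_nonsing_inv _ hu, one_mulVec]
  set N := opNorm G
  have hN : 0 ≤ N := norm_nonneg _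
  rcases hN.eq_or_lt with h0 | hpos
  · rw [← h0, div_zero]
    have := hG.inv.posSemidef.dotProduct_mulVec_nonneg x
    simpa using this
  have hq := quad_le_opNorm G x
  have h1 := hG.posSemidef.dotProduct_mulVec_nonneg (y - N⁻¹ • x)
  have h2 : y ⬝ᵥ G *ᵥ x = x ⬝ᵥ x := by
    rw [dotProduct_mulVec, ← mulVec_transpose, hT, ← hx]
  simp only [star_trivial, mulVec_sub, mulVec_smul, ← hx, sub_dotProduct, dotProduct_sub, smul_dotProduct,
    dotProduct_smul, smul_eq_mul, h2] at h1
  rw [dotProduct_comm y x] at h1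
  rw [div_eq_inv_mul]
  have h3 : N⁻¹ * (N⁻¹ * (x ⬝ᵥ G *ᵥ x)) ≤ N⁻¹ * (x ⬝ᵥ x) := by
    have : N⁻¹ * (x ⬝ᵥ G *ᵥ x) ≤ x ⬝ᵥ x := by
      rw [inv_mul_le_iff₀ hpos]; exact hq
    gcongr
  linarith

lemma woodbury {p K : ℕ} (A : Matrix (Fin p) (Fin K) ℝ)
    (S : Matrix (Fin K) (Fin K) ℝ) (hS : S.PosDef)
    (Γ : Matrix (Fin p) (Fin p) ℝ) (hΓ : Γ.PosDef) (hX : IsUnit (A * S * Aᵀ + Γ).det) :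
    (S⁻¹ + Aᵀ * Γ⁻¹ * A)⁻¹ = S - S * Aᵀ * (A * S * Aᵀ + Γ)⁻¹ * A * S := by
  have hSu : IsUnit S.det := (Matrix.isUnit_iff_isUnit_det _).1 hS.isUnit
  have hΓu : IsUnit Γ.det := (Matrix.isUnit_iff_isUnit_det _).1 hΓ.isUnit
  apply inv_eq_right_inv
  set X := A * S * Aᵀ + Γ with hXd
  have e : A * S * Aᵀ = X - Γ := by rw [hXd]; abel
  have h : Aᵀ * Γ⁻¹ * A * (S * Aᵀ * X⁻¹ * A * S) = Aᵀ * Γ⁻¹ * (A * S * Aᵀ) * X⁻¹ * A * S := by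
    simp only [Matrix.mul_assoc]
  have h' : S⁻¹ * (S * Aᵀ * X⁻¹ * A * S) = S⁻¹ * S * Aᵀ * X⁻¹ * A * S := by
    simp only [Matrix.mul_assoc]
  have h2 : Aᵀ * Γ⁻¹ * X * X⁻¹ = Aᵀ * Γ⁻¹ := by rw [Matrix.mul_assoc, mul_nonsing_inv _ hX, Matrix.mul_one]
  have h3 : Aᵀ * Γ⁻¹ * Γ = Aᵀ := by rw [Matrix.mul_assoc, nonsing_inv_mul _ hΓu, Matrix.mul_one]
  rw [Matrix.add_mul, Matrix.mul_sub, Matrix.mul_sub, h, h', e, nonsing_inv_mul _ hSu, Matrix.one_mul]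
  simp only [Matrix.mul_sub, Matrix.sub_mul, h2, h3]
  abel

/-- block identity -/
lemma block_ldl {p : ℕ} (X : Matrix (Fin p) (Fin p) ℝ)
    (w : Matrix (Fin p) Unit ℝ) (v : Matrix Unit Unit ℝ) :
    fromBlocks X (X * w) (wᵀ * X) (wᵀ * X * w + v) =
      fromBlocks 1 0 wᵀ 1 * fromBlocks X 0 0 v * (fromBlocks 1 0 wᵀ 1)ᵀ := by
  simp [fromBlocks_transpose, fromBlocks_multiply]

lemma block_det {p : ℕ} (X : Matrix (Fin p) (Fin p) ℝ)
    (w : Matrix (Fin p) Unit ℝ) (v : Matrix Unit Unit ℝ) :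
    (fromBlocks X (X * w) (wᵀ * X) (wᵀ * X * w + v)).det = X.det * v.det := by
  rw [block_ldl X, det_mul, det_mul, det_transpose]
  simp [det_fromBlocks_zero₂₁]

lemma block_trace {p : ℕ} (X : Matrix (Fin p) (Fin p) ℝ) (hX : IsUnit X.det)
    (w₁ w₂ : Matrix (Fin p) Unit ℝ) (v₁ v₂ : Matrix Unit Unit ℝ) (hv : IsUnit v₂.det) :
    ((fromBlocks X (X * w₂) (w₂ᵀ * X) (w₂ᵀ * X * w₂ + v₂))⁻¹ *
      fromBlocks X (X * w₁) (w₁ᵀ * X) (w₁ᵀ * X * w₁ + v₁)).trace =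
      p + (v₂⁻¹ * ((w₁ - w₂)ᵀ * X * (w₁ - w₂) + v₁)).trace := by
  have hinv : (fromBlocks X (X * w₂) (w₂ᵀ * X) (w₂ᵀ * X * w₂ + v₂))⁻¹ =
      (fromBlocks 1 0 (-w₂ᵀ) 1)ᵀ * fromBlocks X⁻¹ 0 0 v₂⁻¹ * (fromBlocks 1 0 (-w₂ᵀ) 1) := by
    apply inv_eq_right_inv
    rw [block_ldl X]
    have a1 : (fromBlocks 1 0 w₂ᵀ 1 : Matrix (Fin p ⊕ Unit) (Fin p ⊕ Unit) ℝ)ᵀ * (fromBlocks 1 0 (-w₂ᵀ) 1)ᵀ = 1 := by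
      simp [fromBlocks_transpose, fromBlocks_multiply]
    have a2 : (fromBlocks 1 0 w₂ᵀ 1 : Matrix (Fin p ⊕ Unit) (Fin p ⊕ Unit) ℝ) * (fromBlocks 1 0 (-w₂ᵀ) 1) = 1 := by
      simp [fromBlocks_multiply]
    have a3 : fromBlocks X 0 0 v₂ * fromBlocks X⁻¹ 0 0 v₂⁻¹ = 1 := by
      rw [fromBlocks_multiply, mul_nonsing_inv _ hX, mul_nonsing_inv _ hv]
      simp only [Matrix.mul_zero, Matrix.zero_mul, add_zero, zero_add, fromBlocks_one]
    calc _ = fromBlocks 1 0 w₂ᵀ 1 * (fromBlocks X 0 0 v₂ * ((fromBlocks 1 0 w₂ᵀ 1)ᵀ * (fromBlocks 1 0 (-w₂ᵀ) 1)ᵀ) * fromBlocks X⁻¹ 0 0 v₂⁻¹) * (fromBlocks 1 0 (-w₂ᵀ) 1) := by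
          simp only [Matrix.mul_assoc]
      _ = 1 := by rw [a1, Matrix.mul_one, a3, Matrix.mul_one, a2]
  have hM : (fromBlocks 1 0 (-w₂ᵀ) 1 * fromBlocks 1 0 w₁ᵀ 1 : Matrix (Fin p ⊕ Unit) (Fin p ⊕ Unit) ℝ) = fromBlocks 1 0 (w₁ - w₂)ᵀ 1 := by
    simp [fromBlocks_multiply, sub_eq_neg_add]
  rw [hinv, block_ldl X w₁]
  have : ((fromBlocks 1 0 (-w₂ᵀ) 1)ᵀ * fromBlocks X⁻¹ 0 0 v₂⁻¹ * (fromBlocks 1 0 (-w₂ᵀ) 1) * (fromBlocks 1 0 w₁ᵀ 1 * fromBlocks X 0 0 v₁ * (fromBlocks 1 0 w₁ᵀ 1)ᵀ) : Matrix (Fin p ⊕ Unit) (Fin p ⊕ Unit) ℝ).trace = (fromBlocks X⁻¹ 0 0 v₂⁻¹ * ((fromBlocks 1 0 (w₁ - w₂)ᵀ 1) * fromBlocks X 0 0 v₁ * (fromBlocks 1 0 (w₁ - w₂)ᵀ 1)ᵀ)).trace := by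
    rw [Matrix.mul_assoc, Matrix.mul_assoc, trace_mul_comm, ← hM, transpose_mul]
    simp only [Matrix.mul_assoc]
  rw [this, ← block_ldl X, fromBlocks_multiply, nonsing_inv_mul _ hX, Matrix.trace,
    Fintype.sum_sum_type]
  simp only [diag_apply, fromBlocks_apply₁₁, fromBlocks_apply₂₂, Matrix.zero_mul, add_zero, zero_add,
    one_apply_eq, Finset.sum_const, Finset.card_univ, Fintype.card_fin, Matrix.trace]
  simp

lemma scalar_bound (v₁ v₂ q N D : ℝ) (hD : 0 < D) (h1 : D ≤ v₁) (h2 : D ≤ v₂) (hq : 0 ≤ q)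
    (hqN : q ≤ N) :
    (Real.log (v₂ / v₁) - 1 + v₂⁻¹ * (q + v₁)) / 2 ≤ (|v₁ - v₂| + N) / D := by
  have p1 : 0 < v₁ := hD.trans_le h1
  have p2 : 0 < v₂ := hD.trans_le h2
  have hl := Real.log_le_sub_one_of_pos (div_pos p2 p1)
  have e : v₂ / v₁ - 1 + (v₂⁻¹ * v₁ - 1) = (v₂ - v₁) / v₁ + (v₁ - v₂) / v₂ := by field_simp
  have b : (v₂ - v₁) / v₁ + (v₁ - v₂) / v₂ ≤ |v₁ - v₂| / D := by
    have ha := abs_nonneg (v₁ - v₂)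
    have m1 : |v₁ - v₂| / v₁ ≤ |v₁ - v₂| / D := by gcongr
    have m2 : |v₁ - v₂| / v₂ ≤ |v₁ - v₂| / D := by gcongr
    rcases le_total v₁ v₂ with h | h
    · have : (v₁ - v₂) / v₂ ≤ 0 := div_nonpos_of_nonpos_of_nonneg (by linarith) p2.le
      rw [abs_of_nonpos (by linarith), neg_sub] at *
      linarith
    · have : (v₂ - v₁) / v₁ ≤ 0 := div_nonpos_of_nonpos_of_nonneg (by linarith) p1.le
      rw [abs_of_nonneg (by linarith)] at *
      linarith
  have c : v₂⁻¹ * q ≤ N / D := by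
    rw [inv_mul_eq_div]; exact div_le_div₀ (hq.trans hqN) hqN hD h2
  have d : 0 ≤ |v₁ - v₂| / D := by positivity
  have d' : 0 ≤ N / D := div_nonneg (hq.trans hqN) hD.le
  rw [add_div (|v₁ - v₂|), mul_add]
  linarith

lemma fullCov_eq {p K : ℕ} (A : Matrix (Fin p) (Fin K) ℝ)
    (S : Matrix (Fin K) (Fin K) ℝ) (hST : Sᵀ = S) (Γ : Matrix (Fin p) (Fin p) ℝ)
    (X : Matrix (Fin p) (Fin p) ℝ) (hXd : X = A * S * Aᵀ + Γ) (hX : IsUnit X.det) (hXT : Xᵀ = X)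
    (H : Matrix (Fin K) (Fin K) ℝ) (hH : H = S - S * Aᵀ * X⁻¹ * A * S) (σ2 : ℝ) (β : Fin K → ℝ)
    (w : Matrix (Fin p) Unit ℝ) (hw : w = X⁻¹ * (A * (S * replicateCol Unit β))) :
    fullCov A S Γ σ2 β = fromBlocks X (X * w) (wᵀ * X)
      (wᵀ * X * w + of fun _ _ => σ2 + β ⬝ᵥ H *ᵥ β) := by
  have h1 : X * w = A * (S * replicateCol Unit β) := by
    rw [hw, ← Matrix.mul_assoc, mul_nonsing_inv _ hX, Matrix.one_mul]
  have h2 : wᵀ * X = (X * w)ᵀ := by rw [transpose_mul, hXT]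
  have h3 : A * (S * replicateCol Unit β) = of fun i _ => (A *ᵥ (S *ᵥ β)) i := by
    rw [← replicateCol_mulVec, ← replicateCol_mulVec]; rfl
  have h4 : wᵀ * X * w = of fun _ _ => β ⬝ᵥ (S - H) *ᵥ β := by
    have : S - H = S * Aᵀ * X⁻¹ * A * S := by rw [hH]; abel
    have e : wᵀ * X * w = (replicateCol Unit β)ᵀ * ((S - H) * replicateCol Unit β) := by
      rw [h2, h1, hw, this]
      simp only [transpose_mul, hST, Matrix.mul_assoc]
    rw [e, ← replicateCol_mulVec]
    ext i j
    simp [Matrix.mul_apply, dotProduct]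
  unfold fullCov
  rw [h4, h2, h1, h3, ← hXd]
  have h5 : (of fun _ _ => β ⬝ᵥ S *ᵥ β + σ2 : Matrix Unit Unit ℝ) =
      (of fun _ _ => β ⬝ᵥ (S - H) *ᵥ β) + of fun _ _ => σ2 + β ⬝ᵥ H *ᵥ β := by
    ext i j
    rw [Matrix.add_apply, of_apply, of_apply, of_apply, sub_mulVec, dotProduct_sub]
    ring
  rw [h5]
  rfl

/-- Lemma B.4: Kullback–Leibler bound between two Gaussian factor-regression models.
Here `P_β` is realized as the pushforward of a standard Gaussian under any matrix `B`
with `B Bᵀ` equal to the model covariance, and `G = Σ_Z⁻¹ + Aᵀ Γ⁻¹ A`. -/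
theorem kl_divergence_upper_bound {p K : ℕ}
    (A : Matrix (Fin p) (Fin K) ℝ)
    (S : Matrix (Fin K) (Fin K) ℝ) (hS : S.PosDef)
    (Γ : Matrix (Fin p) (Fin p) ℝ) (hΓ : Γ.PosDef)
    (σ2 : ℝ) (hσ2 : 0 < σ2)
    (β₁ β₂ : Fin K → ℝ)
    (B₁ B₂ : Matrix (Fin p ⊕ Unit) (Fin p ⊕ Unit) ℝ)
    (hB₁ : B₁ * B₁ᵀ = fullCov A S Γ σ2 β₁)
    (hB₂ : B₂ * B₂ᵀ = fullCov A S Γ σ2 β₂) :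
    klDivReal ((stdGaussian (Fin p ⊕ Unit)).map (B₁.mulVec ·))
        ((stdGaussian (Fin p ⊕ Unit)).map (B₂.mulVec ·))
      ≤ (|β₁ ⬝ᵥ (S⁻¹ + Aᵀ * Γ⁻¹ * A)⁻¹.mulVec β₁ -
            β₂ ⬝ᵥ (S⁻¹ + Aᵀ * Γ⁻¹ * A)⁻¹.mulVec β₂| +
          opNorm (S - (S⁻¹ + Aᵀ * Γ⁻¹ * A)⁻¹) * ∑ k, (β₁ k - β₂ k) ^ 2) /
        (σ2 + min (∑ k, β₁ k ^ 2) (∑ k, β₂ k ^ 2) / opNorm (S⁻¹ + Aᵀ * Γ⁻¹ * A)) := by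
  have hST : Sᵀ = S := by simpa using hS.isHermitian.eq
  have hXp : (A * S * Aᵀ + Γ).PosDef := by
    have := hS.posSemidef.mul_mul_conjTranspose_same A
    rw [conjTranspose_eq_transpose_of_trivial] at this
    exact PosDef.posSemidef_add this hΓ
  have hGp : (S⁻¹ + Aᵀ * Γ⁻¹ * A).PosDef := by
    have := hΓ.inv.posSemidef.conjTranspose_mul_mul_same A
    rw [conjTranspose_eq_transpose_of_trivial] at this
    exact hS.inv.add_posSemidef this
  have hXu : IsUnit (A * S * Aᵀ + Γ).det := (Matrix.isUnit_iff_isUnit_det _).1 hXp.isUnit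
  have hH := woodbury A S hS Γ hΓ hXu
  have hge := inv_quad_ge _ hGp
  have hGinv : ∀ x, 0 ≤ x ⬝ᵥ (S⁻¹ + Aᵀ * Γ⁻¹ * A)⁻¹ *ᵥ x := fun x => by
    simpa using hGp.inv.posSemidef.dotProduct_mulVec_nonneg x
  have hN : 0 ≤ opNorm (S⁻¹ + Aᵀ * Γ⁻¹ * A) := norm_nonneg _
  set G := S⁻¹ + Aᵀ * Γ⁻¹ * A with hG
  set X := A * S * Aᵀ + Γ with hXd
  have hXT : Xᵀ = X := by simpa using hXp.isHermitian.eq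
  obtain ⟨w, hw⟩ : ∃ w : (Fin K → ℝ) → Matrix (Fin p) Unit ℝ,
    ∀ β, w β = X⁻¹ * (A * (S * replicateCol Unit β)) := ⟨_, fun _ => rfl⟩
  have hcov := fun β => fullCov_eq A S hST Γ X hXd hXu hXT G⁻¹ hH σ2 β (w β) (hw β)
  have hpos : ∀ β, 0 < σ2 + β ⬝ᵥ G⁻¹ *ᵥ β := fun β => by linarith [hGinv β]
  have hdet : ∀ β, (fullCov A S Γ σ2 β).det = X.det * (σ2 + β ⬝ᵥ G⁻¹ *ᵥ β) := fun β => by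
    rw [hcov, block_det]; simp
  have hdB : ∀ (B : Matrix (Fin p ⊕ Unit) (Fin p ⊕ Unit) ℝ) (β),
      B * Bᵀ = fullCov A S Γ σ2 β → B.det ≠ 0 := by
    intro B β hB h0
    have := congrArg det hB
    rw [det_mul, h0, zero_mul, hdet] at this
    exact (mul_ne_zero hXu.ne_zero (hpos β).ne') this.symm
  rw [kl_formula B₁ B₂ (hdB _ _ hB₁) (hdB _ _ hB₂), hB₁, hB₂, hdet, hdet,
    mul_div_mul_left _ _ hXu.ne_zero, hcov, hcov,
    block_trace X hXu _ _ _ _ (by simpa using (hpos β₂).ne')]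
  have hw12 : w β₁ - w β₂ = w (β₁ - β₂) := by
    have : replicateCol Unit (β₁ - β₂) = replicateCol Unit β₁ - replicateCol Unit β₂ := by
      ext; simp
    simp only [hw, this, Matrix.mul_sub]
  have hquad : (w (β₁ - β₂))ᵀ * X * w (β₁ - β₂) =
      of fun _ _ => (β₁ - β₂) ⬝ᵥ (S - G⁻¹) *ᵥ (β₁ - β₂) := by
    have h := hcov (β₁ - β₂)
    unfold fullCov at h
    have h' := (fromBlocks_inj.1 h).2.2.2
    ext i j
    have h'' := congrFun (congrFun h' i) j
    simp only [of_apply, Matrix.add_apply] at h'' ⊢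
    rw [sub_mulVec, dotProduct_sub]
    linarith
  have htr : ((of fun _ _ => σ2 + β₂ ⬝ᵥ G⁻¹ *ᵥ β₂ : Matrix Unit Unit ℝ)⁻¹ *
      ((w β₁ - w β₂)ᵀ * X * (w β₁ - w β₂) + of fun _ _ => σ2 + β₁ ⬝ᵥ G⁻¹ *ᵥ β₁)).trace =
      (σ2 + β₂ ⬝ᵥ G⁻¹ *ᵥ β₂)⁻¹ * ((β₁ - β₂) ⬝ᵥ (S - G⁻¹) *ᵥ (β₁ - β₂) +
        (σ2 + β₁ ⬝ᵥ G⁻¹ *ᵥ β₁)) := by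
    rw [hw12, hquad]
    simp [Matrix.trace, Matrix.mul_apply]
  rw [htr]
  have hq0 : 0 ≤ (β₁ - β₂) ⬝ᵥ (S - G⁻¹) *ᵥ (β₁ - β₂) := by
    have h := congrFun (congrFun hquad ()) ()
    have h' := hXp.posSemidef.dotProduct_mulVec_nonneg (fun i => w (β₁ - β₂) i ())
    have e : ((w (β₁ - β₂))ᵀ * X * w (β₁ - β₂)) () () =
        star (fun i => w (β₁ - β₂) i ()) ⬝ᵥ X *ᵥ (fun i => w (β₁ - β₂) i ()) := by
      rw [Matrix.mul_assoc]
      simp [Matrix.mul_apply, dotProduct, mulVec]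
    rw [← e, h] at h'
    exact h'
  have hsq : ∀ x : Fin K → ℝ, x ⬝ᵥ x = ∑ k, x k ^ 2 := fun x => by simp [dotProduct, sq]
  have hqN := quad_le_opNorm (S - G⁻¹) (β₁ - β₂)
  rw [hsq] at hqN
  have hmin : 0 ≤ min (∑ k, β₁ k ^ 2) (∑ k, β₂ k ^ 2) :=
    le_min (Finset.sum_nonneg fun _ _ => sq_nonneg _) (Finset.sum_nonneg fun _ _ => sq_nonneg _)
  have hmain := scalar_bound (σ2 + β₁ ⬝ᵥ G⁻¹ *ᵥ β₁) (σ2 + β₂ ⬝ᵥ G⁻¹ *ᵥ β₂) _ _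
    (σ2 + min (∑ k, β₁ k ^ 2) (∑ k, β₂ k ^ 2) / opNorm G)
    (add_pos_of_pos_of_nonneg hσ2 (div_nonneg hmin hN))
    (by
      have := hge β₁
      rw [hsq] at this
      have h2 : min (∑ k, β₁ k ^ 2) (∑ k, β₂ k ^ 2) / opNorm G ≤ (∑ k, β₁ k ^ 2) / opNorm G :=
        div_le_div_of_nonneg_right (min_le_left _ _) hN
      linarith)
    (by
      have := hge β₂
      rw [hsq] at this
      have h2 : min (∑ k, β₁ k ^ 2) (∑ k, β₂ k ^ 2) / opNorm G ≤ (∑ k, β₂ k ^ 2) / opNorm G :=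
        div_le_div_of_nonneg_right (min_le_right _ _) hN
      linarith)
    hq0 hqN
  rw [add_sub_add_left_eq_sub] at hmain
  refine le_trans (le_of_eq ?_) hmain
  simp only [Fintype.card_sum, Fintype.card_fin, Fintype.card_unit]
  push_cast
  ring
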